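/- Let k be a field and Λ a type. Let F = F(k, Λ) be the free metabelian Lie algebra on Λ over k with generators a_α, let R = MvPolynomial Λ k, and let T = Λ →₀ R be the free R-module with basis (u_α)_{α ∈ Λ}. Equip M = R × T with the matrix metabelian Lie bracket ⁅(f,u),(g,v)⁆ = (0, g•u − f•v). Then the Lie algebra homomorphism γ : F → M determined by γ(a_α) = (X_α, u_α) (where X_α is the corresponding polynomial variable) is injective; hence the free metabelian Lie algebra embeds into a matrix metabelian Lie algebra. -/

import Mathlib

/-- The free metabelian Lie algebra on `X` over `k`: the quotient of the free Lie algebra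
on `X` by its second derived ideal `⁅⁅L,L⁆,⁅L,L⁆⁆`. -/
abbrev FreeMetabelianLie (k : Type*) (X : Type*) [CommRing k] :=
  FreeLieAlgebra k X ⧸ LieAlgebra.derivedSeries k (FreeLieAlgebra k X) 2

/-- The image in the free metabelian Lie algebra of the generator `x`. -/
noncomputable def fmGen (k : Type*) {X : Type*} [CommRing k] (x : X) :
    FreeMetabelianLie k X :=
  LieSubmodule.Quotient.mk' _ (FreeLieAlgebra.of k x)
section MatLie

variable (R T : Type*) [CommRing R] [AddCommGroup T] [Module R T]

/-- The matrix metabelian Lie ring structure on `R × T`: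
`⁅(f,u),(g,v)⁆ = (0, g•u − f•v)`. -/
instance matLieRing : LieRing (R × T) where
  bracket x y := (0, y.1 • x.2 - x.1 • y.2)
  add_lie x y z := by
    show (0, z.1 • (x.2 + y.2) - (x.1 + y.1) • z.2) =
      (0, z.1 • x.2 - x.1 • z.2) + (0, z.1 • y.2 - y.1 • z.2)
    ext
    · simp
    · simp only [smul_add, add_smul, Prod.snd_add]
      abel
  lie_add x y z := by
    show (0, (y.1 + z.1) • x.2 - x.1 • (y.2 + z.2)) =
      (0, y.1 • x.2 - x.1 • y.2) + (0, z.1 • x.2 - x.1 • z.2)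
    ext
    · simp
    · simp only [smul_add, add_smul, Prod.snd_add]
      abel
  lie_self x := by
    show (0, x.1 • x.2 - x.1 • x.2) = 0
    ext <;> simp
  leibniz_lie x y z := by
    show ((0:R), (0:R) • x.2 - x.1 • (z.1 • y.2 - y.1 • z.2)) =
      ((0:R), z.1 • (y.1 • x.2 - x.1 • y.2) - (0:R) • z.2) +
      ((0:R), (0:R) • y.2 - y.1 • (z.1 • x.2 - x.1 • z.2))
    ext
    · simp
    · simp only [smul_sub, smul_smul, mul_comm, zero_smul, Prod.snd_add]
      abel

variable (k : Type*) [CommRing k] [Algebra k R] [Module k T]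
  [IsScalarTower k R T] [SMulCommClass k R T]

/-- The matrix metabelian Lie algebra structure over `k` on `R × T`. -/
instance matLieAlgebra : LieAlgebra k (R × T) where
  lie_smul t x y := by
    show ((0:R), (t • y).1 • x.2 - x.1 • (t • y).2) = t • ((0:R), y.1 • x.2 - x.1 • y.2)
    ext
    · simp
    · show (t • y.1) • x.2 - x.1 • t • y.2 = t • (y.1 • x.2 - x.1 • y.2)
      rw [smul_sub, smul_assoc, smul_comm x.1 t y.2]

end MatLie

/-!
Let `L` be metabelian with generators `g i`. Since the derived subalgebra `L'` is abelian, the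
adjoint actions of the `g i` on it commute, so `L'` is a module over `R = k[X i]` with `X i` acting
as `c ↦ ⁅c, g i⁆`. The brackets `⁅g i, g j⁆` span this module and satisfy, by antisymmetry and the
Jacobi identity, the relations between the `u_i ∧ u_j` modulo boundaries in the Koszul complex on
the variables. On `L'` the homomorphism `γ` is `R`-linear and sends `⁅g i, g j⁆` to the Koszul
differential `X j • u_i - X i • u_j`. In each nonzero multidegree the Koszul complex is contracted
by a variable occurring in it, and this homotopy is a `k`-linear left inverse of `γ` on `L'`.
Finally `ker γ ⊆ L'`, because the `g i` span `L` modulo `L'` and their images have the linearly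
independent first components `X i`.
-/

section KoszulFamily

open MvPolynomial

variable {σ k V : Type*} [CommRing k] [AddCommGroup V] [Module (MvPolynomial σ k) V]

variable (k) in
/-- The Koszul differential of `u_i ∧ u_j` over the polynomial ring, up to sign. -/
noncomputable def koszulDifferential (i j : σ) : σ →₀ MvPolynomial σ k :=
  Finsupp.single i (X j) - Finsupp.single j (X i)

variable (k) in
/-- The relations `e i j` has to satisfy in order that `u_i ∧ u_j ↦ e i j` be a well-defined linear
map on the module of 2-chains modulo 3-boundaries of the Koszul complex on the variables. -/
structure IsKoszulFamily (e : σ → σ → V) : Prop where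
  self (i : σ) : e i i = 0
  skew (i j : σ) : e i j = -e j i
  cyclic (i j l : σ) : (X l : MvPolynomial σ k) • e i j + (X i : MvPolynomial σ k) • e j l +
    (X j : MvPolynomial σ k) • e l i = 0

lemma IsKoszulFamily.monomial_smul_sub_monomial_smul {e : σ → σ → V}
    (he : IsKoszulFamily k e) (m : σ →₀ ℕ) {i j μ : σ}
    (hμ : (m + Finsupp.single j 1 + Finsupp.single i 1 : σ →₀ ℕ) μ ≠ 0) :
    (monomial (m + Finsupp.single j 1 - Finsupp.single μ 1) 1 : MvPolynomial σ k) • e i μ -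
      (monomial (m + Finsupp.single i 1 - Finsupp.single μ 1) 1 : MvPolynomial σ k) • e j μ =
    (monomial m 1 : MvPolynomial σ k) • e i j := by
  obtain rfl | hi := eq_or_ne μ i
  · rw [he.self, smul_zero, add_tsub_cancel_right, he.skew j, smul_neg, zero_sub, neg_neg]
  obtain rfl | hj := eq_or_ne μ j
  · rw [he.self, smul_zero, add_tsub_cancel_right, sub_zero]
  obtain ⟨n, rfl⟩ : ∃ n, m = n + Finsupp.single μ 1 := by
    refine ⟨m - Finsupp.single μ 1, (tsub_add_cancel_of_le ?_).symm⟩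
    rw [Finsupp.single_le_iff, Nat.one_le_iff_ne_zero]
    simpa [Finsupp.single_eq_of_ne hi, Finsupp.single_eq_of_ne hj] using hμ
  have cyclic := he.cyclic i j μ
  rw [he.skew μ i, smul_neg, add_neg_eq_zero] at cyclic
  rw [add_right_comm n _ (Finsupp.single j 1), add_right_comm n _ (Finsupp.single i 1),
    add_tsub_cancel_right, add_tsub_cancel_right]
  simp only [monomial_add_single, pow_one, mul_smul]
  rw [← smul_sub, ← cyclic, add_sub_cancel_right]

/-- A variable occurring in the nonconstant monomial with exponent `d`, depending on `d` only. -/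
noncomputable def pivot (d : σ →₀ ℕ) (hd : d ≠ 0) : σ :=
  (Finsupp.support_nonempty_iff.2 hd).choose

lemma pivot_spec (d : σ →₀ ℕ) (hd : d ≠ 0) : d (pivot d hd) ≠ 0 :=
  Finsupp.mem_support_iff.1 (Finsupp.support_nonempty_iff.2 hd).choose_spec

variable [Module k V]

/-- The contracting homotopy of the Koszul complex from 1-chains to 2-chains, followed by
`u_i ∧ u_j ↦ e i j`: in multidegree `d` it is contraction with the variable `pivot d`.

The truncated subtraction loses information only if `pivot d = i`, where `e i i` is expected to
vanish. -/
noncomputable def koszulContraction (e : σ → σ → V) : (σ →₀ MvPolynomial σ k) →ₗ[k] V :=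
  Finsupp.lsum k fun i ↦ (basisMonomials σ k).constr k fun m ↦
    let μ := pivot (m + Finsupp.single i 1) (by simp)
    (monomial (m - Finsupp.single μ 1) 1 : MvPolynomial σ k) • e i μ

lemma koszulContraction_single_monomial (e : σ → σ → V) (i : σ) (m : σ →₀ ℕ) :
    koszulContraction e (Finsupp.single i (monomial m (1 : k))) =
      (monomial (m - Finsupp.single (pivot (m + Finsupp.single i 1) (by simp)) 1) 1 :
        MvPolynomial σ k) • e i (pivot (m + Finsupp.single i 1) (by simp)) := by
  rw [koszulContraction, Finsupp.lsum_single]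
  exact (basisMonomials σ k).constr_basis k _ m

namespace IsKoszulFamily

variable [IsScalarTower k (MvPolynomial σ k) V] {e : σ → σ → V}

lemma koszulContraction_smul_koszulDifferential (he : IsKoszulFamily k e)
    (p : MvPolynomial σ k) (i j : σ) :
    koszulContraction e (p • koszulDifferential k i j) = p • e i j := by
  induction p using MvPolynomial.induction_on' with
  | add p q hp hq => rw [add_smul, map_add, hp, hq, add_smul]
  | monomial m a =>
    have differential : (monomial m 1 : MvPolynomial σ k) • koszulDifferential k i j =
        Finsupp.single i (monomial (m + Finsupp.single j 1) 1) -
          Finsupp.single j (monomial (m + Finsupp.single i 1) 1) := by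
      simp [koszulDifferential, smul_sub, monomial_add_single]
    have pivot_comm : pivot (m + Finsupp.single i 1 + Finsupp.single j 1) (by simp) =
        pivot (m + Finsupp.single j 1 + Finsupp.single i 1) (by simp) := by
      simp only [add_right_comm m]
    rw [← mul_one a, ← smul_eq_mul, ← smul_monomial, smul_assoc, smul_assoc, map_smul,
      differential, map_sub, koszulContraction_single_monomial, koszulContraction_single_monomial,
      pivot_comm, he.monomial_smul_sub_monomial_smul m (pivot_spec _ _)]

theorem injective_of_map_eq_koszulDifferential (he : IsKoszulFamily k e)
    (hspan : Submodule.span (MvPolynomial σ k) (Set.range e.uncurry) = ⊤)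
    (f : V →ₗ[MvPolynomial σ k] σ →₀ MvPolynomial σ k)
    (hf : ∀ i j, f (e i j) = koszulDifferential k i j) : Function.Injective f := by
  refine Function.LeftInverse.injective (g := koszulContraction e) fun v ↦ ?_
  have hv : v ∈ Submodule.span (MvPolynomial σ k) (Set.range e.uncurry) := hspan ▸ trivial
  induction hv using Submodule.closure_induction with
  | zero => simp
  | add v w _ _ hv hw => rw [map_add, map_add, hv, hw]
  | smul_mem p v hv =>
    obtain ⟨⟨i, j⟩, rfl⟩ := hv
    simp only [Function.uncurry_apply_pair, map_smul, hf,
      he.koszulContraction_smul_koszulDifferential]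

end IsKoszulFamily

end KoszulFamily

section PolynomialModule

open MvPolynomial

open scoped IsMulCommutative in
theorem exists_mvPolynomial_module_of_commute {σ k V : Type*} [CommSemiring k] [AddCommMonoid V]
    [Module k V] (f : σ → Module.End k V) (hf : ∀ i j, Commute (f i) (f j)) :
    ∃ _ : Module (MvPolynomial σ k) V, IsScalarTower k (MvPolynomial σ k) V ∧
      ∀ i v, (X i : MvPolynomial σ k) • v = f i v := by
  let A := Algebra.adjoin k (Set.range f)
  have : IsMulCommutative A := Algebra.isMulCommutative_adjoin k <| by
    rintro _ ⟨i, rfl⟩ _ ⟨j, rfl⟩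
    exact hf i j
  let φ : MvPolynomial σ k →ₐ[k] Module.End k V :=
    A.val.comp (aeval fun i ↦ ⟨f i, Algebra.subset_adjoin ⟨i, rfl⟩⟩)
  have φ_X (i : σ) : φ (X i) = f i := by simp [φ]
  let := Module.compHom V φ.toRingHom
  refine ⟨inferInstance, ⟨fun a p v ↦ ?_⟩, fun i v ↦ ?_⟩
  · exact LinearMap.congr_fun (map_smul φ a p) v
  · exact LinearMap.congr_fun (φ_X i) v

theorem map_mvPolynomial_smul_of_map_X_smul {σ k V W : Type*} [CommSemiring k] [AddCommMonoid V]
    [AddCommMonoid W] [Module k V] [Module k W] [Module (MvPolynomial σ k) V]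
    [Module (MvPolynomial σ k) W] [IsScalarTower k (MvPolynomial σ k) V]
    [IsScalarTower k (MvPolynomial σ k) W] (f : V →ₗ[k] W)
    (hf : ∀ i v, f ((X i : MvPolynomial σ k) • v) = (X i : MvPolynomial σ k) • f v)
    (p : MvPolynomial σ k) (v : V) : f (p • v) = p • f v := by
  induction p using MvPolynomial.induction_on generalizing v with
  | C a => rw [← algebraMap_eq, algebraMap_smul, algebraMap_smul, map_smul]
  | add p q hp hq => rw [add_smul, add_smul, map_add, hp, hq]
  | mul_X p i hp => rw [mul_smul, mul_smul, hp, hf]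

end PolynomialModule

section LieGenerators

open LieAlgebra LieSubalgebra

variable {k L : Type*} [CommRing k] [LieRing L] [LieAlgebra k L]

/-- The quotient map by a Lie ideal, as a morphism of Lie algebras. -/
def lieQuotientMk (I : LieIdeal k L) : L →ₗ⁅k⁆ L ⧸ I :=
  { LieSubmodule.Quotient.mk' I with map_lie' := rfl }

lemma lieQuotientMk_surjective (I : LieIdeal k L) : Function.Surjective (lieQuotientMk I) :=
  LieSubmodule.Quotient.surjective_mk' I

lemma lieQuotientMk_eq_zero {I : LieIdeal k L} {x : L} : lieQuotientMk I x = 0 ↔ x ∈ I :=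
  LieSubmodule.Quotient.mk_eq_zero I

lemma lie_mem_derivedSeries_one (x y : L) : ⁅x, y⁆ ∈ derivedSeries k L 1 :=
  LieSubmodule.lie_mem_lie (LieSubmodule.mem_top x) (LieSubmodule.mem_top y)

lemma lieSpan_image_eq_top {L' : Type*} [LieRing L'] [LieAlgebra k L'] {f : L →ₗ⁅k⁆ L'}
    (hf : Function.Surjective f) {s : Set L} (hs : lieSpan k L s = ⊤) :
    lieSpan k L' (f '' s) = ⊤ := by
  rw [← map_lieSpan, hs, ← LieHom.range_eq_map, LieHom.range_eq_top]
  exact hf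

theorem span_eq_top_of_lie_eq_zero {s : Set L} (hs : lieSpan k L s = ⊤)
    (h : ∀ x ∈ s, ∀ y ∈ s, ⁅x, y⁆ = 0) : Submodule.span k s = ⊤ := by
  rw [← coe_lieSpan_eq_span_of_forall_lie_eq_zero h, hs, LieSubalgebra.top_toSubmodule]

theorem lie_eq_zero_of_lieSpan_eq_top {s : Set L} (hs : lieSpan k L s = ⊤)
    (h : ∀ x ∈ s, ∀ y ∈ s, ⁅x, y⁆ = 0) (x y : L) : ⁅x, y⁆ = 0 := by
  have : IsLieAbelian (lieSpan k L s) := isLieAbelian_lieSpan_iff.2 h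
  have mem (z : L) : z ∈ lieSpan k L s := hs ▸ LieSubalgebra.mem_top z
  exact congrArg Subtype.val (trivial_lie_zero _ _ (⟨x, mem x⟩ : lieSpan k L s) ⟨y, mem y⟩)

theorem derivedSeries_one_le_of_lie_mem {s : Set L} (hs : lieSpan k L s = ⊤) {I : LieIdeal k L}
    (h : ∀ x ∈ s, ∀ y ∈ s, ⁅x, y⁆ ∈ I) : derivedSeries k L 1 ≤ I := by
  refine (LieSubmodule.lie_le_iff _ _ _).2 fun x _ y _ ↦ ?_
  rw [← lieQuotientMk_eq_zero, LieHom.map_lie]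
  refine lie_eq_zero_of_lieSpan_eq_top (lieSpan_image_eq_top (lieQuotientMk_surjective I) hs) ?_ _ _
  rintro _ ⟨x, hx, rfl⟩ _ ⟨y, hy, rfl⟩
  rw [← LieHom.map_lie, lieQuotientMk_eq_zero]
  exact h x hx y hy

theorem span_sup_derivedSeries_one {s : Set L} (hs : lieSpan k L s = ⊤) :
    Submodule.span k s ⊔ (derivedSeries k L 1).toSubmodule = ⊤ := by
  let q := lieQuotientMk (derivedSeries k L 1)
  have span_image : Submodule.span k (q '' s) = ⊤ := by
    refine span_eq_top_of_lie_eq_zero (lieSpan_image_eq_top (lieQuotientMk_surjective _) hs) ?_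
    rintro _ ⟨x, -, rfl⟩ _ ⟨y, -, rfl⟩
    rw [← LieHom.map_lie, lieQuotientMk_eq_zero]
    exact lie_mem_derivedSeries_one x y
  have ker_q : (q : L →ₗ[k] L ⧸ derivedSeries k L 1).ker = (derivedSeries k L 1).toSubmodule :=
    Submodule.ker_mkQ _
  rw [← ker_q, ← Submodule.comap_map_eq, Submodule.map_span]
  exact (congrArg _ span_image).trans (Submodule.comap_top _)

lemma freeLieAlgebra_lieSpan_range_of (X : Type*) :
    lieSpan k (FreeLieAlgebra k X) (Set.range (FreeLieAlgebra.of k)) = ⊤ := by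
  let S := lieSpan k (FreeLieAlgebra k X) (Set.range (FreeLieAlgebra.of k))
  let r : FreeLieAlgebra k X →ₗ⁅k⁆ S :=
    FreeLieAlgebra.lift k fun x ↦ ⟨FreeLieAlgebra.of k x, subset_lieSpan ⟨x, rfl⟩⟩
  have incl_comp_r : S.incl.comp r = LieHom.id := by
    ext x
    simp [r]
  refine eq_top_iff.2 fun y _ ↦ ?_
  rw [← LieHom.id_apply (R := k) y, ← incl_comp_r]
  exact (r y).2

end LieGenerators

section DerivedModule

open LieAlgebra LieSubalgebra MvPolynomial

variable {σ k L : Type*} [CommRing k] [LieRing L] [LieAlgebra k L]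

variable (k) in
/-- The bracket of two elements, as an element of the derived subalgebra. -/
def derivedBracket (x y : L) : derivedSeries k L 1 :=
  ⟨⁅x, y⁆, lie_mem_derivedSeries_one x y⟩

lemma lie_derivedSeries_one_eq_zero [IsLieAbelian (derivedSeries k L 1)] {x : L}
    (hx : x ∈ derivedSeries k L 1) (c : derivedSeries k L 1) : ⁅x, c⁆ = 0 :=
  trivial_lie_zero _ (derivedSeries k L 1) (⟨x, hx⟩ : derivedSeries k L 1) c

lemma lie_lie_comm [IsLieAbelian (derivedSeries k L 1)] (x y : L) (c : derivedSeries k L 1) :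
    ⁅x, ⁅y, c⁆⁆ = ⁅y, ⁅x, c⁆⁆ := by
  rw [leibniz_lie, lie_derivedSeries_one_eq_zero (lie_mem_derivedSeries_one x y), zero_add]

variable (k) in
/-- A module structure over polynomials on the derived subalgebra in which the variable `X i` acts
as the right bracket `c ↦ ⁅c, g i⁆`. -/
class IsAdjointModule (g : σ → L) [Module (MvPolynomial σ k) (derivedSeries k L 1)] : Prop
    extends IsScalarTower k (MvPolynomial σ k) (derivedSeries k L 1) where
  X_smul (i : σ) (c : derivedSeries k L 1) : (X i : MvPolynomial σ k) • c = -⁅g i, c⁆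

theorem exists_isAdjointModule [IsLieAbelian (derivedSeries k L 1)] (g : σ → L) :
    ∃ _ : Module (MvPolynomial σ k) (derivedSeries k L 1), IsAdjointModule k g := by
  let f (i : σ) : Module.End k (derivedSeries k L 1) := -LieModule.toEnd k L _ (g i)
  have commute (i j : σ) : Commute (f i) (f j) := LinearMap.ext fun c ↦ by
    simp [f, lie_lie_comm (g i)]
  obtain ⟨_, _, X_smul⟩ := exists_mvPolynomial_module_of_commute f commute
  exact ⟨inferInstance, ⟨X_smul⟩⟩

variable (g : σ → L) [Module (MvPolynomial σ k) (derivedSeries k L 1)]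
  [IsAdjointModule k g]

lemma isKoszulFamily_derivedBracket :
    IsKoszulFamily k fun i j ↦ derivedBracket k (g i) (g j) where
  self i := Subtype.ext (lie_self (g i))
  skew i j := Subtype.ext (lie_skew (g i) (g j)).symm
  cyclic i j l := by
    simp only [IsAdjointModule.X_smul (g := g)]
    rw [← neg_add, ← neg_add, neg_eq_zero, add_assoc, add_comm]
    exact Subtype.ext (lie_jacobi (g i) (g j) (g l))

variable {g} [IsLieAbelian (derivedSeries k L 1)] (hg : lieSpan k L (Set.range g) = ⊤)
include hg

lemma lie_mem_of_mem_submodule (N : Submodule (MvPolynomial σ k) (derivedSeries k L 1)) (x : L)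
    {c : derivedSeries k L 1} (hc : c ∈ N) : ⁅x, c⁆ ∈ N := by
  have hx : x ∈ lieSpan k L (Set.range g) := hg ▸ LieSubalgebra.mem_top x
  induction hx using lieSpan_induction with
  | mem x hx =>
    obtain ⟨i, rfl⟩ := hx
    rw [← neg_neg ⁅g i, c⁆, ← IsAdjointModule.X_smul]
    exact N.neg_mem (N.smul_mem _ hc)
  | zero => rw [zero_lie]; exact N.zero_mem
  | add x y _ _ hx hy => rw [add_lie]; exact N.add_mem hx hy
  | smul t x _ hx => rw [smul_lie]; exact N.smul_of_tower_mem t hx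
  | lie x y _ _ _ _ =>
    rw [lie_derivedSeries_one_eq_zero (lie_mem_derivedSeries_one x y)]
    exact N.zero_mem

theorem span_range_derivedBracket :
    Submodule.span (MvPolynomial σ k)
      (Set.range (Function.uncurry fun i j ↦ derivedBracket k (g i) (g j))) = ⊤ := by
  set N := Submodule.span (MvPolynomial σ k)
    (Set.range (Function.uncurry fun i j ↦ derivedBracket k (g i) (g j)))
  let N' : LieSubmodule k L (derivedSeries k L 1) :=
    { N.restrictScalars k with lie_mem := fun {x _} hc ↦ lie_mem_of_mem_submodule hg N x hc }
  let I : LieIdeal k L := N'.map (LieSubmodule.incl _)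
  have derived_le : derivedSeries k L 1 ≤ I := by
    refine derivedSeries_one_le_of_lie_mem hg ?_
    rintro _ ⟨i, rfl⟩ _ ⟨j, rfl⟩
    exact ⟨derivedBracket k (g i) (g j), Submodule.subset_span ⟨(i, j), rfl⟩, rfl⟩
  refine eq_top_iff.2 fun c _ ↦ ?_
  obtain ⟨d, hd, hdc⟩ := derived_le c.2
  exact Subtype.ext hdc ▸ hd

end DerivedModule

section MatLieHom

open LieAlgebra LieSubalgebra MvPolynomial

variable {k L : Type*} [CommRing k] [LieRing L] [LieAlgebra k L]

section

variable {R T : Type*} [CommRing R] [AddCommGroup T] [Module R T]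

lemma matLie_lie (x y : R × T) : ⁅x, y⁆ = (0, y.1 • x.2 - x.1 • y.2) := rfl

variable [Algebra k R] [Module k T] [IsScalarTower k R T]

lemma fst_map_eq_zero_of_mem_derivedSeries_one (γ : L →ₗ⁅k⁆ R × T) {c : L}
    (hc : c ∈ derivedSeries k L 1) : (γ c).1 = 0 := by
  replace hc : c ∈ Submodule.span k {⁅x, y⁆ | (x : L) (y : L)} := by
    rw [← coe_derivedSeries_one_eq]
    exact hc
  induction hc using Submodule.span_induction with
  | mem c hc =>
    obtain ⟨x, y, rfl⟩ := hc
    rw [LieHom.map_lie, matLie_lie]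
  | zero => simp
  | add x y _ _ hx hy => simp [hx, hy]
  | smul t x _ hx => simp [hx]

end

variable {σ : Type*} {g : σ → L} {γ : L →ₗ⁅k⁆ MvPolynomial σ k × (σ →₀ MvPolynomial σ k)}

lemma mem_derivedSeries_one_of_fst_map_eq_zero (hg : lieSpan k L (Set.range g) = ⊤)
    (hγ : ∀ i, (γ (g i)).1 = X i) {x : L} (hx : (γ x).1 = 0) : x ∈ derivedSeries k L 1 := by
  nontriviality L
  have := Module.nontrivial k L
  obtain ⟨u, hu, c, hc, rfl⟩ := Submodule.mem_sup.1
    (span_sup_derivedSeries_one hg ▸ Submodule.mem_top (x := x))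
  let fstγ : L →ₗ[k] MvPolynomial σ k := LinearMap.fst k _ (σ →₀ MvPolynomial σ k) ∘ₗ γ.toLinearMap
  have independent : LinearIndependent k (fstγ ∘ g) := by
    have fstγ_comp_g : fstγ ∘ g = X := funext hγ
    rw [fstγ_comp_g]
    exact linearIndependent_X σ k
  have fstγ_u : (γ u).1 = 0 := by
    simpa [fst_map_eq_zero_of_mem_derivedSeries_one γ hc] using hx
  have u_eq_zero : u = 0 :=
    Submodule.disjoint_def.1 (Submodule.range_ker_disjoint independent) u hu fstγ_u
  rwa [u_eq_zero, zero_add]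

theorem matLie_injOn_derivedSeries_one [IsLieAbelian (derivedSeries k L 1)]
    (hg : lieSpan k L (Set.range g) = ⊤) (hγ : ∀ i, γ (g i) = (X i, Finsupp.single i 1)) :
    Set.InjOn γ (derivedSeries k L 1) := by
  obtain ⟨_, _⟩ := exists_isAdjointModule (k := k) g
  let f : derivedSeries k L 1 →ₗ[k] σ →₀ MvPolynomial σ k :=
    LinearMap.snd k (MvPolynomial σ k) _ ∘ₗ γ.toLinearMap ∘ₗ
      (derivedSeries k L 1).toSubmodule.subtype
  have f_X_smul (i : σ) (c : derivedSeries k L 1) :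
      f ((X i : MvPolynomial σ k) • c) = (X i : MvPolynomial σ k) • f c := by
    rw [IsAdjointModule.X_smul (g := g)]
    change (γ (-⁅g i, (c : L)⁆)).2 = (X i : MvPolynomial σ k) • (γ c).2
    simp [matLie_lie, hγ, fst_map_eq_zero_of_mem_derivedSeries_one γ c.2]
  have f_derivedBracket (i j : σ) :
      f (derivedBracket k (g i) (g j)) = koszulDifferential k i j := by
    change (γ ⁅g i, g j⁆).2 = koszulDifferential k i j
    simp [koszulDifferential, matLie_lie, hγ]
  have injective_f := (isKoszulFamily_derivedBracket g).injective_of_map_eq_koszulDifferential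
    (span_range_derivedBracket hg)
    { f with map_smul' := map_mvPolynomial_smul_of_map_X_smul f f_X_smul } f_derivedBracket
  intro x hx y hy hxy
  exact congrArg Subtype.val (@injective_f ⟨x, hx⟩ ⟨y, hy⟩ (congrArg Prod.snd hxy))

theorem matLie_injective_of_lieSpan_range_eq_top [IsLieAbelian (derivedSeries k L 1)]
    (hg : lieSpan k L (Set.range g) = ⊤) (hγ : ∀ i, γ (g i) = (X i, Finsupp.single i 1)) :
    Function.Injective γ := by
  refine (injective_iff_map_eq_zero γ).2 fun x hx ↦ ?_
  have mem_derived : x ∈ derivedSeries k L 1 :=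
    mem_derivedSeries_one_of_fst_map_eq_zero hg (fun i ↦ congrArg Prod.fst (hγ i))
      (congrArg Prod.fst hx)
  exact matLie_injOn_derivedSeries_one hg hγ mem_derived (zero_mem _) (hx.trans γ.map_zero.symm)

end MatLieHom

section FreeMetabelian

open LieAlgebra LieSubalgebra

variable (k X : Type*) [CommRing k]

instance : IsLieAbelian (derivedSeries k (FreeMetabelianLie k X) 1) := by
  rw [abelian_iff_derived_succ_eq_bot, one_add_one_eq_two, ← derivedSeries_def,
    ← LieIdeal.derivedSeries_map_eq 2 (lieQuotientMk_surjective _), LieIdeal.map_eq_bot_iff]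
  exact fun x hx ↦ lieQuotientMk_eq_zero.2 hx

lemma lieSpan_range_fmGen :
    lieSpan k (FreeMetabelianLie k X) (Set.range (fmGen k)) = ⊤ := by
  have := lieSpan_image_eq_top (lieQuotientMk_surjective (derivedSeries k (FreeLieAlgebra k X) 2))
    (freeLieAlgebra_lieSpan_range_of X)
  rwa [← Set.range_comp] at this

end FreeMetabelian

theorem freeMetabelian_embeds_matLie_general {k Λ : Type*} [CommRing k]
    (γ : FreeMetabelianLie k Λ →ₗ⁅k⁆ (MvPolynomial Λ k × (Λ →₀ MvPolynomial Λ k)))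
    (hγ : ∀ α : Λ, γ (fmGen k α) = (MvPolynomial.X α, Finsupp.single α 1)) :
    Function.Injective γ :=
  matLie_injective_of_lieSpan_range_eq_top (lieSpan_range_fmGen k Λ) hγ

/-- The free metabelian Lie algebra on `Λ` embeds into the matrix metabelian Lie algebra
`R × T` where `R = MvPolynomial Λ k` and `T = Λ →₀ R` is the free `R`-module on `Λ`: the
Lie algebra homomorphism sending the generator `a_α` to `(X_α, u_α)` is injective. -/
theorem freeMetabelian_embeds_matLie {k Λ : Type*} [Field k]
    (γ : FreeMetabelianLie k Λ →ₗ⁅k⁆ (MvPolynomial Λ k × (Λ →₀ MvPolynomial Λ k)))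
    (hγ : ∀ α : Λ, γ (fmGen k α) = (MvPolynomial.X α, Finsupp.single α 1)) :
    Function.Injective γ :=
  freeMetabelian_embeds_matLie_general γ hγ
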